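/- Let X be a continuum, M ≺ H(κ) a countable elementary submodel with X ∈ M, L = 2^X ∩ M, K* ∈ M the lattice generated by the sets F* (F a finite family of closed subsets of X) representing C(X), and K = K* ∩ M. Then the Wallman space wK is homeomorphic to C(wL), the hyperspace of subcontinua of the metric continuum wL. -/

import Mathlib

open Set TopologicalSpace FirstOrder

universe u v

/-- An ultrafilter on a lattice `F` of subsets of `α` (in the Wallman sense): a proper filter
on `F` such that every member of `F` meeting all members of the filter belongs to it. -/
structure LUltra {α : Type u} (F : Set (Set α)) where
  sets : Set (Set α)
  sets_subset : sets ⊆ F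
  univ_mem : Set.univ ∈ sets
  empty_notMem : ∅ ∉ sets
  inter_mem : ∀ a ∈ sets, ∀ b ∈ sets, a ∩ b ∈ sets
  superset_mem : ∀ a ∈ sets, ∀ b ∈ F, a ⊆ b → b ∈ sets
  ultra : ∀ a ∈ F, a ∉ sets → ∃ b ∈ sets, a ∩ b = ∅

/-- The Wallman topology: the sets `â = {u : a ∈ u}`, `a ∈ F`, form a base for closed sets. -/
instance LUltra.instTopologicalSpace {α : Type u} (F : Set (Set α)) :
    TopologicalSpace (LUltra F) :=
  TopologicalSpace.generateFrom {s | ∃ a ∈ F, s = {u : LUltra F | a ∈ u.sets}ᶜ}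

/-- The hyperspace `C(X)` of subcontinua (nonempty closed connected subsets) of `X`. -/
def Subcontinua (X : Type u) [TopologicalSpace X] : Type u :=
  {A : Set X // IsClosed A ∧ IsConnected A}

/-- The Vietoris topology on the hyperspace of subcontinua. -/
instance Subcontinua.instTopologicalSpace (X : Type u) [TopologicalSpace X] :
    TopologicalSpace (Subcontinua X) :=
  TopologicalSpace.generateFrom
    ({s | ∃ U : Set X, IsOpen U ∧ s = {A : Subcontinua X | A.1 ⊆ U}} ∪
     {s | ∃ U : Set X, IsOpen U ∧ s = {A : Subcontinua X | (A.1 ∩ U).Nonempty}})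

/-- The basic closed set `F*` in `C(X)` determined by a finite family `F` of closed sets:
`F* = C(X) \ {G ∈ C(X) : G ∩ ⋂F = ∅ ∧ ∀ F ∈ F, ¬ G ⊆ F}`. -/
def starSet {X : Type u} [TopologicalSpace X] (F : Finset (Set X)) : Set (Subcontinua X) :=
  {G | ¬ ((G.1 ∩ ⋂₀ (↑F : Set (Set X))) = ∅ ∧ ∀ s ∈ F, ¬ G.1 ⊆ s)}

/-- The sublattice of subsets of `α` generated by a family `B` under finite unions and
finite intersections. -/
inductive LatGen {α : Type u} (B : Set (Set α)) : Set α → Prop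
  | base {s : Set α} : s ∈ B → LatGen B s
  | union {s t : Set α} : LatGen B s → LatGen B t → LatGen B (s ∪ t)
  | inter {s t : Set α} : LatGen B s → LatGen B t → LatGen B (s ∩ t)

/-- `x ∈ H(κ)`: `x` hereditarily has cardinality `< κ` (for regular `κ` this agrees with
`|TC(x)| < κ`). -/
def HeredLt (κ : Cardinal.{1}) (x : ZFSet.{0}) : Prop :=
  ZFSet.mem_wf.fix (fun x ih => Cardinal.mk x.toSet < κ ∧ ∀ y, ∀ h : y ∈ x, ih y h) x

/-- `ZFSet` as a structure for the language with one binary relation, interpreted as `∈`. -/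
instance ZFSet.memLangStructure : FirstOrder.Language.graph.Structure ZFSet.{0} where
  funMap := fun {_} f => isEmptyElim f
  RelMap := fun {_} r => match r with | .adj => fun x => x 0 ∈ x 1

/-- `H(κ)` as a substructure of the universe of sets with membership. -/
def HKappa (κ : Cardinal.{1}) : FirstOrder.Language.graph.Substructure ZFSet.{0} where
  carrier := {x | HeredLt κ x}
  fun_mem := fun {_} f => isEmptyElim f

/-- `z` belongs to the elementary submodel `M ≺ H(κ)`. -/
def MemOf (κ : Cardinal.{1})
    (M : FirstOrder.Language.graph.ElementarySubstructure (HKappa κ))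
    (z : ZFSet.{0}) : Prop :=
  ∃ h : z ∈ HKappa κ, (⟨z, h⟩ : HKappa κ) ∈ M

/-- The ZF-set coding a subset `A` of (the extension of) the ZF-set `X`. -/
noncomputable def codeSet (X : ZFSet.{0}) (A : Set ↥X.toSet) : ZFSet.{0} :=
  ZFSet.sep (fun y => ∃ h : y ∈ X.toSet, (⟨y, h⟩ : ↥X.toSet) ∈ A) X

/-- The subset of `X` decoded from a ZF-set `t`. -/
def decodeSet (X : ZFSet.{0}) (t : ZFSet.{0}) : Set ↥X.toSet :=
  {p : ↥X.toSet | (p : ZFSet) ∈ t}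

/-- The ZF-set coding the topology of the space `X`: the set of codes of open subsets. -/
noncomputable def opensZ (X : ZFSet.{0}) [TopologicalSpace ↥X.toSet] : ZFSet.{0} :=
  ZFSet.sep (fun t => IsOpen (decodeSet X t)) X.powerset

/-- The lattice `L = 2^X ∩ M`: the closed subsets of `X` whose codes belong to `M`. -/
def Lfam (X : ZFSet.{0}) [TopologicalSpace ↥X.toSet] (κ : Cardinal.{1})
    (M : FirstOrder.Language.graph.ElementarySubstructure (HKappa κ)) :
    Set (Set ↥X.toSet) :=
  {A | IsClosed A ∧ MemOf κ M (codeSet X A)}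

/-- The ZF-set coding a family `S` of subcontinua of `X` (each subcontinuum is coded as a
subset of `X`). -/
noncomputable def codeHypFam (X : ZFSet.{0}) [TopologicalSpace ↥X.toSet]
    (S : Set (Subcontinua ↥X.toSet)) : ZFSet.{0} :=
  ZFSet.sep (fun c => ∃ G : Subcontinua ↥X.toSet, G ∈ S ∧ c = codeSet X G.1) X.powerset

/-- The lattice `K*` representing `C(X)`: generated under finite unions and intersections
by the sets `F*` for finite families `F` of closed subsets of `X`. -/
def KStarLat (X : ZFSet.{0}) [TopologicalSpace ↥X.toSet] :
    Set (Set (Subcontinua ↥X.toSet)) :=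
  {S | LatGen
    {T | ∃ F : Finset (Set ↥X.toSet), (∀ s ∈ F, IsClosed s) ∧ T = starSet F} S}

/-- The ZF-set coding the lattice `K*`. -/
noncomputable def codeKStarLat (X : ZFSet.{0}) [TopologicalSpace ↥X.toSet] : ZFSet.{0} :=
  ZFSet.sep (fun d => ∃ S ∈ KStarLat X, d = codeHypFam X S) X.powerset.powerset

/-- The lattice `K = K* ∩ M`. -/
def Kfam (X : ZFSet.{0}) [TopologicalSpace ↥X.toSet] (κ : Cardinal.{1})
    (M : FirstOrder.Language.graph.ElementarySubstructure (HKappa κ)) :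
    Set (Set (Subcontinua ↥X.toSet)) :=
  {S | S ∈ KStarLat X ∧ MemOf κ M (codeHypFam X S)}


section Definability
variable {κ : Cardinal.{1}}

def Dfn {γ : Type} (P : (γ → HKappa κ) → Prop) : Prop :=
  ∃ φ : Language.graph.Formula γ, ∀ v : γ → HKappa κ, φ.Realize v ↔ P v

theorem Dfn.mem {γ : Type} (i j : γ) :
    Dfn (fun v : γ → HKappa κ => (v i).1 ∈ (v j).1) := by
  refine ⟨Language.adj.formula₂ (Language.Term.var i) (Language.Term.var j), fun v => ?_⟩
  rw [Language.Formula.realize_rel₂]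
  rfl

theorem Dfn.not {γ : Type} {P : (γ → HKappa κ) → Prop} (h : Dfn P) : Dfn (fun v => ¬ P v) := by
  obtain ⟨φ, hφ⟩ := h
  exact ⟨φ.not, fun v => by rw [Language.Formula.realize_not, hφ]⟩

theorem Dfn.forall {γ ι : Type} [Finite ι] {P : ι → (γ → HKappa κ) → Prop}
    (h : ∀ i, Dfn (P i)) : Dfn (fun v => ∀ i, P i v) := by
  choose φ hφ using h
  exact ⟨Language.Formula.iInf φ, fun v => by rw [Language.Formula.realize_iInf]; simp [hφ]⟩

theorem Dfn.exists {γ ι : Type} [Finite ι] {P : ι → (γ → HKappa κ) → Prop}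
    (h : ∀ i, Dfn (P i)) : Dfn (fun v => ∃ i, P i v) := by
  choose φ hφ using h
  exact ⟨Language.Formula.iSup φ, fun v => by rw [Language.Formula.realize_iSup]; simp [hφ]⟩

theorem Dfn.and {γ : Type} {P Q : (γ → HKappa κ) → Prop} (h : Dfn P) (h' : Dfn Q) :
    Dfn (fun v => P v ∧ Q v) := by
  obtain ⟨φ, hφ⟩ := h
  obtain ⟨ψ, hψ⟩ := h'
  exact ⟨φ ⊓ ψ, fun v => by rw [Language.Formula.realize_inf, hφ, hψ]⟩

theorem Dfn.congr {γ : Type} {P Q : (γ → HKappa κ) → Prop} (h : Dfn P) (h' : ∀ v, P v ↔ Q v) :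
    Dfn Q := by
  obtain ⟨φ, hφ⟩ := h
  exact ⟨φ, fun v => by rw [hφ, h']⟩

theorem Dfn.imp {γ : Type} {P Q : (γ → HKappa κ) → Prop} (h : Dfn P) (h' : Dfn Q) :
    Dfn (fun v => P v → Q v) :=
  (h.and h'.not).not.congr fun v => by tauto

theorem Dfn.iff {γ : Type} {P Q : (γ → HKappa κ) → Prop} (h : Dfn P) (h' : Dfn Q) :
    Dfn (fun v => P v ↔ Q v) :=
  ((h.imp h').and (h'.imp h)).congr fun v => by tauto

theorem Dfn.const {γ : Type} (p : Prop) : Dfn (fun _ : γ → HKappa κ => p) := by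
  by_cases hp : p
  · exact ⟨⊤, fun v => by simp [hp]⟩
  · exact ⟨⊥, fun v => by simp [hp]⟩

theorem Dfn.bool {γ ι : Type} [Finite ι] (ψ : (ι → Prop) → Prop)
    {P : ι → (γ → HKappa κ) → Prop} (h : ∀ i, Dfn (P i)) :
    Dfn (fun v => ψ (fun i => P i v)) := by
  have : Dfn (fun v => ∃ σ : ι → Prop, ψ σ ∧ ∀ i, (P i v ↔ σ i)) :=
    Dfn.exists fun σ => (Dfn.const _).and (Dfn.forall fun i => (h i).iff (Dfn.const _))
  refine this.congr fun v => ⟨?_, fun h => ⟨_, h, fun i => Iff.rfl⟩⟩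
  rintro ⟨σ, h1, h2⟩
  have : (fun i => P i v) = σ := funext fun i => propext (h2 i)
  rwa [this]

theorem Dfn.ex {γ : Type} {P : (γ → HKappa κ) → HKappa κ → Prop}
    (h : Dfn (fun w : Option γ → HKappa κ => P (fun i => w (some i)) (w none))) :
    Dfn (fun v => ∃ x, P v x) := by
  obtain ⟨φ, hφ⟩ := h
  refine ⟨(φ.relabel (fun o : Option γ => (o.elim (Sum.inr ()) Sum.inl : γ ⊕ Unit))).iExs Unit,
    fun v => ?_⟩
  rw [Language.Formula.realize_iExs]
  simp only [Language.Formula.realize_relabel, hφ]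
  constructor
  · rintro ⟨i, hi⟩
    exact ⟨i (), hi⟩
  · rintro ⟨x, hx⟩
    exact ⟨fun _ => x, hx⟩

theorem Dfn.all {γ : Type} {P : (γ → HKappa κ) → HKappa κ → Prop}
    (h : Dfn (fun w : Option γ → HKappa κ => P (fun i => w (some i)) (w none))) :
    Dfn (fun v => ∀ x, P v x) :=
  (Dfn.ex (P := fun v x => ¬ P v x) h.not).not.congr fun v => by simp

theorem elem_witness (M : Language.graph.ElementarySubstructure (HKappa κ))
    {α β : Type} [Finite β] (P : (α ⊕ β → HKappa κ) → Prop) (hP : Dfn P) (a : α → M)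
    (b : β → HKappa κ) (h : P (Sum.elim (fun i => (a i : HKappa κ)) b)) :
    ∃ b : β → M, P (Sum.elim (fun i => (a i : HKappa κ)) (fun i => (b i : HKappa κ))) := by
  obtain ⟨φ, hφ⟩ := hP
  have h1 : (φ.iExs β).Realize (fun i => (a i : HKappa κ)) := by
    rw [Language.Formula.realize_iExs]
    exact ⟨b, (hφ _).2 h⟩
  have h2 := (M.subtype.map_formula (φ.iExs β) a).1 h1
  rw [Language.Formula.realize_iExs] at h2
  obtain ⟨c, hc⟩ := h2
  refine ⟨c, ?_⟩
  rw [← hφ]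
  have h3 := (M.subtype.map_formula φ (Sum.elim a c)).2 hc
  convert h3 using 1
  ext i
  cases i <;> rfl

end Definability

section Rep
variable {X : Type u} [TopologicalSpace X]

/-- The family of subcontinua described by a propositional condition `ψ` on the relations
meeting `A i` and being contained in `A i`. -/
def rep {ι : Type} (ψ : (ι ⊕ ι → Prop) → Prop) (A : ι → Set X) : Set (Subcontinua X) :=
  {G | ψ (Sum.elim (fun i => (G.1 ∩ A i).Nonempty) (fun i => G.1 ⊆ A i))}

def MonoP {ι : Type} (ψ : (ι → Prop) → Prop) : Prop :=
  ∀ σ τ : ι → Prop, (∀ i, σ i → τ i) → ψ σ → ψ τ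

/-- `S` is represented by a monotone condition over members of `L`. -/
def HasRep (L : Set (Set X)) (S : Set (Subcontinua X)) : Prop :=
  ∃ (ι : Type) (_ : Finite ι) (ψ : (ι ⊕ ι → Prop) → Prop) (A : ι → Set X),
    MonoP ψ ∧ (∀ i, A i ∈ L) ∧ S = rep ψ A

theorem HasRep.union {L : Set (Set X)} {S T : Set (Subcontinua X)} (hS : HasRep L S)
    (hT : HasRep L T) : HasRep L (S ∪ T) := by
  obtain ⟨ι, _, ψ, A, hm, hA, rfl⟩ := hS
  obtain ⟨ι', _, ψ', A', hm', hA', rfl⟩ := hT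
  refine ⟨ι ⊕ ι', inferInstance,
    fun σ => ψ (fun k => σ (Sum.map Sum.inl Sum.inl k)) ∨ ψ' (fun k => σ (Sum.map Sum.inr Sum.inr k)),
    Sum.elim A A', ?_, ?_, ?_⟩
  · rintro σ τ h (h1 | h1)
    · exact Or.inl (hm _ _ (fun i => h _) h1)
    · exact Or.inr (hm' _ _ (fun i => h _) h1)
  · rintro (i | i)
    · exact hA i
    · exact hA' i
  · ext G
    simp only [rep, mem_union, mem_setOf_eq]
    apply or_congr
    · apply iff_of_eq; congr 1; funext k; rcases k with k | k <;> rfl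
    · apply iff_of_eq; congr 1; funext k; rcases k with k | k <;> rfl

theorem HasRep.inter {L : Set (Set X)} {S T : Set (Subcontinua X)} (hS : HasRep L S)
    (hT : HasRep L T) : HasRep L (S ∩ T) := by
  obtain ⟨ι, _, ψ, A, hm, hA, rfl⟩ := hS
  obtain ⟨ι', _, ψ', A', hm', hA', rfl⟩ := hT
  refine ⟨ι ⊕ ι', inferInstance,
    fun σ => ψ (fun k => σ (Sum.map Sum.inl Sum.inl k)) ∧ ψ' (fun k => σ (Sum.map Sum.inr Sum.inr k)),
    Sum.elim A A', ?_, ?_, ?_⟩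
  · rintro σ τ h ⟨h1, h2⟩
    exact ⟨hm _ _ (fun i => h _) h1, hm' _ _ (fun i => h _) h2⟩
  · rintro (i | i)
    · exact hA i
    · exact hA' i
  · ext G
    simp only [rep, mem_inter_iff, mem_setOf_eq]
    apply and_congr
    · apply iff_of_eq; congr 1; funext k; rcases k with k | k <;> rfl
    · apply iff_of_eq; congr 1; funext k; rcases k with k | k <;> rfl

theorem hasRep_starSet (F : Finset (Set X)) (hF : ∀ s ∈ F, IsClosed s) :
    HasRep {A | IsClosed A} (starSet F) := by
  refine ⟨Option (Fin F.card), inferInstance,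
    fun σ => σ (Sum.inl none) ∨ ∃ i, σ (Sum.inr (some i)),
    fun o => o.elim (⋂₀ (↑F : Set (Set X))) (fun i => (F.equivFin.symm i : Set X)), ?_, ?_, ?_⟩
  · rintro σ τ h (h1 | ⟨i, h1⟩)
    · exact Or.inl (h _ h1)
    · exact Or.inr ⟨i, h _ h1⟩
  · rintro (_ | i)
    · exact isClosed_sInter fun t ht => hF t ht
    · exact hF _ (F.equivFin.symm i).2
  · ext G
    simp only [starSet, rep, mem_setOf_eq, Sum.elim_inl, Sum.elim_inr, Option.elim]
    rw [not_and_or, ← Ne, ← Set.nonempty_iff_ne_empty]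
    apply or_congr Iff.rfl
    push Not
    constructor
    · rintro ⟨s, hs, h⟩
      exact ⟨F.equivFin ⟨s, hs⟩, by simpa using h⟩
    · rintro ⟨i, hi⟩
      exact ⟨_, (F.equivFin.symm i).2, hi⟩

end Rep

section ZF

theorem heredLt_iff {κ : Cardinal.{1}} {x : ZFSet.{0}} :
    HeredLt κ x ↔ Cardinal.mk x.toSet < κ ∧ ∀ y, y ∈ x → HeredLt κ y := by
  unfold HeredLt
  rw [WellFounded.fix_eq]

theorem HeredLt.mem {κ : Cardinal.{1}} {x y : ZFSet.{0}} (h : HeredLt κ x) (hy : y ∈ x) :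
    HeredLt κ y := (heredLt_iff.1 h).2 y hy

variable {X : ZFSet.{0}}

theorem mem_codeSet {A : Set ↥X.toSet} {p : ZFSet.{0}} :
    p ∈ codeSet X A ↔ ∃ h : p ∈ X.toSet, (⟨p, h⟩ : ↥X.toSet) ∈ A := by
  simp only [codeSet, ZFSet.mem_sep]
  constructor
  · exact fun h => h.2
  · rintro ⟨h, h'⟩
    exact ⟨h, h, h'⟩

theorem coe_mem_codeSet {A : Set ↥X.toSet} {p : ↥X.toSet} : (p : ZFSet) ∈ codeSet X A ↔ p ∈ A := by
  rw [mem_codeSet]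
  exact ⟨fun h => h.2, fun h => ⟨p.2, h⟩⟩

theorem codeSet_injective : Function.Injective (codeSet X) := by
  intro A B h
  ext p
  rw [← coe_mem_codeSet, h, coe_mem_codeSet]

theorem codeSet_subset (A : Set ↥X.toSet) : codeSet X A ⊆ X := by
  intro p hp
  exact (mem_codeSet.1 hp).1

theorem codeSet_mem_powerset (A : Set ↥X.toSet) : codeSet X A ∈ X.powerset :=
  ZFSet.mem_powerset.2 (codeSet_subset A)

theorem codeSet_decodeSet {t : ZFSet.{0}} (ht : t ⊆ X) : codeSet X (decodeSet X t) = t := by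
  ext p
  rw [mem_codeSet]
  exact ⟨fun h => h.2, fun h => ⟨ht h, h⟩⟩

theorem decodeSet_codeSet (A : Set ↥X.toSet) : decodeSet X (codeSet X A) = A := by
  ext p
  exact coe_mem_codeSet

variable [TopologicalSpace ↥X.toSet]

theorem mem_opensZ {t : ZFSet.{0}} :
    t ∈ opensZ X ↔ ∃ U : Set ↥X.toSet, IsOpen U ∧ t = codeSet X U := by
  simp only [opensZ, ZFSet.mem_sep, ZFSet.mem_powerset]
  constructor
  · rintro ⟨h, h'⟩
    exact ⟨_, h', (codeSet_decodeSet h).symm⟩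
  · rintro ⟨U, hU, rfl⟩
    exact ⟨codeSet_subset U, by rwa [decodeSet_codeSet]⟩

theorem mem_codeHypFam {S : Set (Subcontinua ↥X.toSet)} {c : ZFSet.{0}} :
    c ∈ codeHypFam X S ↔ ∃ G : Subcontinua ↥X.toSet, G ∈ S ∧ c = codeSet X G.1 := by
  simp only [codeHypFam, ZFSet.mem_sep]
  constructor
  · exact fun h => h.2
  · rintro ⟨G, hG, rfl⟩
    exact ⟨codeSet_mem_powerset _, G, hG, rfl⟩

theorem code_mem_codeHypFam {S : Set (Subcontinua ↥X.toSet)} {G : Subcontinua ↥X.toSet} :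
    codeSet X G.1 ∈ codeHypFam X S ↔ G ∈ S := by
  rw [mem_codeHypFam]
  constructor
  · rintro ⟨G', h, h'⟩
    rwa [Subtype.ext (codeSet_injective h')]
  · exact fun h => ⟨G, h, rfl⟩

theorem codeHypFam_injective : Function.Injective (codeHypFam X) := by
  intro S T h
  ext G
  rw [← code_mem_codeHypFam, h, code_mem_codeHypFam]

theorem codeHypFam_mem (S : Set (Subcontinua ↥X.toSet)) : codeHypFam X S ∈ X.powerset.powerset := by
  rw [ZFSet.mem_powerset]
  intro c hc
  obtain ⟨G, _, rfl⟩ := mem_codeHypFam.1 hc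
  exact codeSet_mem_powerset _

theorem mem_codeKStarLat {d : ZFSet.{0}} :
    d ∈ codeKStarLat X ↔ ∃ S ∈ KStarLat X, d = codeHypFam X S := by
  simp only [codeKStarLat, ZFSet.mem_sep]
  constructor
  · exact fun h => h.2
  · rintro ⟨G, hG, rfl⟩
    exact ⟨codeHypFam_mem _, G, hG, rfl⟩

theorem univ_mem_KStarLat : (Set.univ : Set (Subcontinua ↥X.toSet)) ∈ KStarLat X := by
  refine LatGen.base ⟨∅, by simp, ?_⟩
  ext G
  simp [starSet, G.2.2.nonempty.ne_empty]

theorem mem_mem_codeKStarLat {c : ZFSet.{0}} :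
    (∃ d ∈ codeKStarLat X, c ∈ d) ↔ ∃ G : Subcontinua ↥X.toSet, c = codeSet X G.1 := by
  constructor
  · rintro ⟨d, hd, hc⟩
    obtain ⟨S, hS, rfl⟩ := mem_codeKStarLat.1 hd
    obtain ⟨G, _, rfl⟩ := mem_codeHypFam.1 hc
    exact ⟨G, rfl⟩
  · rintro ⟨G, rfl⟩
    exact ⟨_, mem_codeKStarLat.2 ⟨_, univ_mem_KStarLat, rfl⟩, code_mem_codeHypFam.2 (mem_univ _)⟩

theorem hasRep_of_mem_KStarLat {S : Set (Subcontinua ↥X.toSet)} (hS : S ∈ KStarLat X) :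
    HasRep {A | IsClosed A} S := by
  have hS' : LatGen _ S := hS
  induction hS' with
  | base h =>
    obtain ⟨F, hF, rfl⟩ := h
    exact hasRep_starSet F hF
  | union h1 h2 ih1 ih2 => exact (ih1 h1).union (ih2 h2)
  | inter h1 h2 ih1 ih2 => exact (ih1 h1).inter (ih2 h2)

end ZF

section Elem
variable {κ : Cardinal.{1}}

def ClF (x o a : HKappa κ) : Prop :=
  (∀ p : HKappa κ, p.1 ∈ a.1 → p.1 ∈ x.1) ∧
    ∃ u : HKappa κ, u.1 ∈ o.1 ∧ ∀ p : HKappa κ, p.1 ∈ x.1 → (p.1 ∈ a.1 ↔ ¬ p.1 ∈ u.1)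

theorem Dfn.clF {γ : Type} (i j k : γ) :
    Dfn (fun v : γ → HKappa κ => ClF (v i) (v j) (v k)) := by
  unfold ClF
  refine Dfn.and (Dfn.all ((Dfn.mem _ _).imp (Dfn.mem _ _))) (Dfn.ex ((Dfn.mem _ _).and ?_))
  exact Dfn.all ((Dfn.mem _ _).imp ((Dfn.mem _ _).iff (Dfn.mem _ _).not))

variable {X : ZFSet.{0}} [TopologicalSpace ↥X.toSet]

theorem clF_iff (hbig : HeredLt κ X.powerset.powerset) (hX : X ∈ HKappa κ)
    (hO : opensZ X ∈ HKappa κ) (a : HKappa κ) :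
    ClF ⟨X, hX⟩ ⟨opensZ X, hO⟩ a ↔ ∃ A : Set ↥X.toSet, IsClosed A ∧ a.1 = codeSet X A := by
  constructor
  · rintro ⟨h1, u, hu, h2⟩
    obtain ⟨U, hU, hUu⟩ := mem_opensZ.1 hu
    refine ⟨Uᶜ, hU.isClosed_compl, ?_⟩
    ext p
    constructor
    · intro hp
      have hpX : p ∈ X := h1 ⟨p, HeredLt.mem a.2 hp⟩ hp
      have := (h2 ⟨p, HeredLt.mem a.2 hp⟩ hpX).1 hp
      refine mem_codeSet.2 ⟨hpX, fun h => this ?_⟩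
      rw [hUu]
      exact mem_codeSet.2 ⟨hpX, h⟩
    · intro hp
      obtain ⟨hpX, hp⟩ := mem_codeSet.1 hp
      refine (h2 ⟨p, HeredLt.mem hX hpX⟩ hpX).2 fun h => hp ?_
      simp only [hUu] at h
      exact (mem_codeSet.1 h).2
  · rintro ⟨A, hA, ha⟩
    refine ⟨fun p hp => ?_, ⟨codeSet X Aᶜ, ?_⟩, mem_opensZ.2 ⟨_, hA.isOpen_compl, rfl⟩, ?_⟩
    · rw [ha] at hp
      exact codeSet_subset _ hp
    · exact hO.mem (mem_opensZ.2 ⟨_, hA.isOpen_compl, rfl⟩)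
    · intro p hp
      rw [ha, mem_codeSet, mem_codeSet]
      constructor
      · rintro ⟨_, h⟩ ⟨_, h'⟩
        exact h' h
      · intro h
        refine ⟨hp, ?_⟩
        by_contra h'
        exact h ⟨hp, h'⟩

variable {M : Language.graph.ElementarySubstructure (HKappa κ)}

theorem Lfam_elem (hbig : HeredLt κ X.powerset.powerset) (hXM : MemOf κ M X)
    (htopM : MemOf κ M (opensZ X)) {α β : Type} [Finite α] [Finite β]
    (ψ : (α ⊕ β → Prop) → Prop) (A : α → Set ↥X.toSet) (hA : ∀ i, A i ∈ Lfam X κ M)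
    (B : β → Set ↥X.toSet) (hB : ∀ j, IsClosed (B j))
    (h : ∀ p, ψ (Sum.elim (fun i => p ∈ A i) (fun j => p ∈ B j))) :
    ∃ B' : β → Set ↥X.toSet, (∀ j, B' j ∈ Lfam X κ M) ∧
      ∀ p, ψ (Sum.elim (fun i => p ∈ A i) (fun j => p ∈ B' j)) := by
  obtain ⟨hX, hXM⟩ := hXM
  obtain ⟨hO, hOM⟩ := htopM
  choose hAc hAH hAM using hA
  let P : (Option (Option α) ⊕ β → HKappa κ) → Prop := fun v =>
    (∀ j : β, ClF (v (Sum.inl none)) (v (Sum.inl (some none))) (v (Sum.inr j))) ∧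
    ∀ p : HKappa κ, p.1 ∈ (v (Sum.inl none)).1 →
      ψ (fun k : α ⊕ β => p.1 ∈ (v (Sum.map (fun i => some (some i)) id k)).1)
  have hP : Dfn P := by
    refine (Dfn.forall fun j => Dfn.clF _ _ _).and (Dfn.all ((Dfn.mem _ _).imp ?_))
    exact Dfn.bool ψ fun k => Dfn.mem _ _
  let a : Option (Option α) → M := fun o => o.elim ⟨⟨X, hX⟩, hXM⟩
    (fun o => o.elim ⟨⟨opensZ X, hO⟩, hOM⟩ (fun i => ⟨⟨codeSet X (A i), hAH i⟩, hAM i⟩))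
  have hBH : ∀ j, codeSet X (B j) ∈ HKappa κ := fun j =>
    (hbig.mem (ZFSet.mem_powerset.2 (fun _ h => h))).mem (codeSet_mem_powerset _)
  obtain ⟨b, hb1, hb2⟩ := elem_witness M P hP a (fun j => ⟨codeSet X (B j), hBH j⟩) (by
    refine ⟨fun j => (clF_iff hbig hX hO _).2 ⟨B j, hB j, rfl⟩, fun p hp => ?_⟩
    have := h ⟨p.1, hp⟩
    convert this using 1
    funext k
    rcases k with k | k
    · exact propext (coe_mem_codeSet (p := ⟨p.1, hp⟩))
    · exact propext (coe_mem_codeSet (p := ⟨p.1, hp⟩)))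
  have := fun j => (clF_iff hbig hX hO _).1 (hb1 j)
  choose B' hB'c hB' using this
  refine ⟨B', fun j => ⟨hB'c j, ?_⟩, fun p => ?_⟩
  · rw [← hB' j]
    exact ⟨(b j).1.2, (b j).2⟩
  · have := hb2 ⟨p.1, HeredLt.mem hX p.2⟩ p.2
    convert this using 1
    funext k
    rcases k with k | k
    · exact propext (coe_mem_codeSet (p := p)).symm
    · have h1 := hB' k
      simp only [Sum.elim_inr] at h1
      simp only [Sum.elim_inr, Sum.map_inr, id, h1]
      exact propext (coe_mem_codeSet (p := p)).symm

def RepF {ι : Type} (ψ : (ι ⊕ ι → Prop) → Prop) (k d : HKappa κ) (s : ι → HKappa κ) : Prop :=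
  d.1 ∈ k.1 ∧ ∀ G : HKappa κ, (∃ e : HKappa κ, e.1 ∈ k.1 ∧ G.1 ∈ e.1) →
    (G.1 ∈ d.1 ↔ ψ (fun j : ι ⊕ ι => Sum.elim
      (fun i => ∃ p : HKappa κ, p.1 ∈ G.1 ∧ p.1 ∈ (s i).1)
      (fun i => ∀ p : HKappa κ, p.1 ∈ G.1 → p.1 ∈ (s i).1) j))

theorem Dfn.repF {γ ι : Type} [Finite ι] (ψ : (ι ⊕ ι → Prop) → Prop) (k d : γ) (s : ι → γ) :
    Dfn (fun v : γ → HKappa κ => RepF ψ (v k) (v d) (fun i => v (s i))) := by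
  unfold RepF
  refine (Dfn.mem _ _).and (Dfn.all (Dfn.imp (Dfn.ex ((Dfn.mem _ _).and (Dfn.mem _ _)))
    ((Dfn.mem _ _).iff ?_)))
  refine Dfn.bool ψ (P := fun (j : ι ⊕ ι) (v : Option γ → HKappa κ) => Sum.elim
      (fun i => ∃ p : HKappa κ, p.1 ∈ (v none).1 ∧ p.1 ∈ (v (some (s i))).1)
      (fun i => ∀ p : HKappa κ, p.1 ∈ (v none).1 → p.1 ∈ (v (some (s i))).1) j) ?_
  rintro (i | i)
  · exact Dfn.ex ((Dfn.mem _ _).and (Dfn.mem _ _))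
  · exact Dfn.all ((Dfn.mem _ _).imp (Dfn.mem _ _))

theorem repF_iff (hbig : HeredLt κ X.powerset.powerset)
    (hK : codeKStarLat X ∈ HKappa κ) {ι : Type} (ψ : (ι ⊕ ι → Prop) → Prop) (d : HKappa κ)
    (s : ι → HKappa κ) (A : ι → Set ↥X.toSet) (hs : ∀ i, (s i).1 = codeSet X (A i)) :
    RepF ψ ⟨codeKStarLat X, hK⟩ d s ↔ rep ψ A ∈ KStarLat X ∧ d.1 = codeHypFam X (rep ψ A) := by
  have hcH : ∀ B : Set ↥X.toSet, codeSet X B ∈ HKappa κ := fun B =>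
    (hbig.mem (ZFSet.mem_powerset.2 (fun _ h => h))).mem (codeSet_mem_powerset _)
  have key : ∀ (G : Subcontinua ↥X.toSet) (GH : HKappa κ), GH.1 = codeSet X G.1 →
      ((ψ (fun j : ι ⊕ ι => Sum.elim
      (fun i => ∃ p : HKappa κ, p.1 ∈ GH.1 ∧ p.1 ∈ (s i).1)
      (fun i => ∀ p : HKappa κ, p.1 ∈ GH.1 → p.1 ∈ (s i).1) j)) ↔ G ∈ rep ψ A) := by
    intro G GH hG
    apply iff_of_eq
    unfold rep
    rw [mem_setOf_eq]
    congr 1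
    funext j
    rcases j with i | i
    · simp only [Sum.elim_inl, hG, hs]
      apply propext
      constructor
      · rintro ⟨p, h1, h2⟩
        obtain ⟨hp, h1⟩ := mem_codeSet.1 h1
        obtain ⟨hp, h2⟩ := mem_codeSet.1 h2
        exact ⟨_, h1, h2⟩
      · rintro ⟨p, h1, h2⟩
        exact ⟨⟨p.1, (hcH G.1).mem (coe_mem_codeSet.2 h1)⟩, coe_mem_codeSet.2 h1,
          coe_mem_codeSet.2 h2⟩
    · simp only [Sum.elim_inr, hG, hs]
      apply propext
      constructor
      · intro h p hp
        exact coe_mem_codeSet.1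
          (h ⟨p.1, (hcH G.1).mem (coe_mem_codeSet.2 hp)⟩ (coe_mem_codeSet.2 hp))
      · intro h p hp
        obtain ⟨hpX, hp⟩ := mem_codeSet.1 hp
        exact mem_codeSet.2 ⟨hpX, h hp⟩
  constructor
  · rintro ⟨h1, h2⟩
    obtain ⟨S, hS, hd⟩ := mem_codeKStarLat.1 h1
    have : S = rep ψ A := by
      ext G
      rw [← key G ⟨_, hcH G.1⟩ rfl, ← h2 ⟨_, hcH G.1⟩, hd, code_mem_codeHypFam]
      obtain ⟨e, he, he'⟩ := mem_mem_codeKStarLat.2 ⟨G, rfl⟩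
      exact ⟨⟨e, hK.mem he⟩, he, he'⟩
    subst this
    exact ⟨hS, hd⟩
  · rintro ⟨h1, h2⟩
    refine ⟨by rw [h2]; exact mem_codeKStarLat.2 ⟨_, h1, rfl⟩, ?_⟩
    rintro GH ⟨e, he, he'⟩
    obtain ⟨G, hG⟩ := mem_mem_codeKStarLat.1 ⟨e.1, he, he'⟩
    rw [key G GH hG, hG, h2, code_mem_codeHypFam]

theorem mem_Kfam_iff (hbig : HeredLt κ X.powerset.powerset) (hXM : MemOf κ M X)
    (htopM : MemOf κ M (opensZ X)) (hKM : MemOf κ M (codeKStarLat X))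
    (S : Set (Subcontinua ↥X.toSet)) :
    S ∈ Kfam X κ M ↔ S ∈ KStarLat X ∧ HasRep (Lfam X κ M) S := by
  obtain ⟨hX, hXM⟩ := hXM
  obtain ⟨hO, hOM⟩ := htopM
  obtain ⟨hK, hKM⟩ := hKM
  have hcH : ∀ B : Set ↥X.toSet, codeSet X B ∈ HKappa κ := fun B =>
    (hbig.mem (ZFSet.mem_powerset.2 (fun _ h => h))).mem (codeSet_mem_powerset _)
  constructor
  · rintro ⟨hS, hSH, hSM⟩
    refine ⟨hS, ?_⟩
    obtain ⟨ι, _, ψ, A, hm, hA, hSr⟩ := hasRep_of_mem_KStarLat hS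
    let P : (Fin 4 ⊕ ι → HKappa κ) → Prop := fun v =>
      (∀ i : ι, ClF (v (Sum.inl 0)) (v (Sum.inl 1)) (v (Sum.inr i))) ∧
        RepF ψ (v (Sum.inl 2)) (v (Sum.inl 3)) (fun i => v (Sum.inr i))
    have hP : Dfn P := (Dfn.forall fun i => Dfn.clF _ _ _).and (Dfn.repF ψ _ _ _)
    let a : Fin 4 → M := ![⟨⟨X, hX⟩, hXM⟩, ⟨⟨opensZ X, hO⟩, hOM⟩, ⟨⟨codeKStarLat X, hK⟩, hKM⟩,
      ⟨⟨codeHypFam X S, hSH⟩, hSM⟩]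
    obtain ⟨b, hb1, hb2⟩ := elem_witness M P hP a (fun i => ⟨codeSet X (A i), hcH _⟩) (by
      refine ⟨fun i => (clF_iff hbig hX hO _).2 ⟨A i, hA i, rfl⟩, ?_⟩
      refine (repF_iff hbig hK ψ _ _ A (fun i => rfl)).2 ?_
      rw [← hSr]
      exact ⟨hS, rfl⟩)
    have := fun j => (clF_iff hbig hX hO _).1 (hb1 j)
    choose A' hA'c hA' using this
    refine ⟨ι, inferInstance, ψ, A', hm, fun i => ⟨hA'c i, ?_⟩, ?_⟩
    · rw [← hA' i]
      exact ⟨(b i).1.2, (b i).2⟩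
    · have := (repF_iff hbig hK ψ _ _ A' hA').1 hb2
      exact codeHypFam_injective this.2
  · rintro ⟨hS, ι, _, ψ, A, hm, hA, rfl⟩
    refine ⟨hS, ?_⟩
    choose hAc hAH hAM using hA
    let P : (Option ι ⊕ Unit → HKappa κ) → Prop := fun v =>
      RepF ψ (v (Sum.inl none)) (v (Sum.inr ())) (fun i => v (Sum.inl (some i)))
    have hP : Dfn P := Dfn.repF ψ _ _ _
    let a : Option ι → M := fun o => o.elim ⟨⟨codeKStarLat X, hK⟩, hKM⟩
      (fun i => ⟨⟨codeSet X (A i), hAH i⟩, hAM i⟩)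
    obtain ⟨b, hb⟩ := elem_witness M P hP a (fun _ => ⟨codeHypFam X (rep ψ A),
      hbig.mem (codeHypFam_mem _)⟩) ((repF_iff hbig hK ψ _ _ A (fun i => rfl)).2 ⟨hS, rfl⟩)
    have := ((repF_iff hbig hK ψ _ _ A (fun i => rfl)).1 hb).2
    rw [← this]
    exact ⟨(b ()).1.2, (b ()).2⟩

end Elem

section Good

theorem good_of_subbasis {Z : Type u} {Y : Type v} [T : TopologicalSpace Y] (f : Z → Y)
    (K : Set (Set Z)) (hempty : ∅ ∈ K) (huniv : Set.univ ∈ K)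
    (hunion : ∀ a ∈ K, ∀ b ∈ K, a ∪ b ∈ K) (hinter : ∀ a ∈ K, ∀ b ∈ K, a ∩ b ∈ K)
    (B : Set (Set Y)) (hB : T = generateFrom B)
    (h : ∀ U ∈ B, ∀ y ∈ U, ∃ A ∈ K, ∃ W, IsOpen W ∧ y ∈ W ∧ f ⁻¹' W ⊆ A ∧ A ⊆ f ⁻¹' U)
    (U C : Set Y) (hU : IsOpen U) (hC : IsCompact C) (hCU : C ⊆ U) :
    ∃ A ∈ K, ∃ W, IsOpen W ∧ C ⊆ W ∧ f ⁻¹' W ⊆ A ∧ A ⊆ f ⁻¹' U := by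
  have hpt : ∀ V : Set Y, IsOpen V → ∀ y ∈ V,
      ∃ A ∈ K, ∃ W, IsOpen W ∧ y ∈ W ∧ f ⁻¹' W ⊆ A ∧ A ⊆ f ⁻¹' V := by
    intro V hV
    have hV' : GenerateOpen B V := by
      rw [hB] at hV
      exact hV
    induction hV' with
    | basic s hs => exact h s hs
    | univ => exact fun y _ => ⟨_, huniv, Set.univ, isOpen_univ, mem_univ _, by simp, by simp⟩
    | inter s t hs ht ihs iht =>
      have hso : IsOpen s := by rw [hB]; exact hs
      have hto : IsOpen t := by rw [hB]; exact ht
      rintro y ⟨hys, hyt⟩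
      obtain ⟨A, hA, W, hW, hyW, h1, h2⟩ := ihs hso y hys
      obtain ⟨A', hA', W', hW', hyW', h1', h2'⟩ := iht hto y hyt
      exact ⟨_, hinter _ hA _ hA', _, hW.inter hW', ⟨hyW, hyW'⟩, inter_subset_inter h1 h1',
        inter_subset_inter h2 h2'⟩
    | sUnion S hS ih =>
      rintro y ⟨s, hs, hys⟩
      have hso : IsOpen s := by rw [hB]; exact hS s hs
      obtain ⟨A, hA, W, hW, hyW, h1, h2⟩ := ih s hs hso y hys
      exact ⟨A, hA, W, hW, hyW, h1, h2.trans (preimage_mono (subset_sUnion_of_mem hs))⟩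
  refine hC.induction_on (p := fun s => ∃ A ∈ K, ∃ W, IsOpen W ∧ s ⊆ W ∧ f ⁻¹' W ⊆ A ∧
    A ⊆ f ⁻¹' U) ?_ ?_ ?_ ?_
  · exact ⟨∅, hempty, ∅, isOpen_empty, by simp, by simp, by simp⟩
  · rintro s t hst ⟨A, hA, W, hW, h1, h2⟩
    exact ⟨A, hA, W, hW, hst.trans h1, h2⟩
  · rintro s t ⟨A, hA, W, hW, h1, h2, h3⟩ ⟨A', hA', W', hW', h1', h2', h3'⟩
    exact ⟨_, hunion _ hA _ hA', _, hW.union hW', union_subset_union h1 h1',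
      union_subset_union h2 h2', union_subset h3 h3'⟩
  · intro y hy
    obtain ⟨A, hA, W, hW, hyW, h1, h2⟩ := hpt U hU y (hCU hy)
    exact ⟨W, mem_nhdsWithin_of_mem_nhds (hW.mem_nhds hyW), A, hA, W, hW, subset_rfl, h1, h2⟩

/-- Abstract recognition of Wallman spaces. -/
theorem wallman_homeo {Z : Type u} {Y : Type u} [TopologicalSpace Z] [TopologicalSpace Y]
    [CompactSpace Z] [CompactSpace Y] [T2Space Y] (f : Z → Y) (hf : Continuous f)
    (hsurj : Function.Surjective f)
    (K : Set (Set Z)) (huniv : Set.univ ∈ K)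
    (hinter : ∀ a ∈ K, ∀ b ∈ K, a ∩ b ∈ K) (hclosed : ∀ a ∈ K, IsClosed a)
    (hdisj : ∀ a ∈ K, ∀ b ∈ K, a ∩ b = ∅ → ∀ z ∈ a, ∀ z' ∈ b, f z ≠ f z')
    (hgood : ∀ U C : Set Y, IsOpen U → IsCompact C → C ⊆ U →
      ∃ A ∈ K, ∃ W, IsOpen W ∧ C ⊆ W ∧ f ⁻¹' W ⊆ A ∧ A ⊆ f ⁻¹' U) :
    Nonempty (LUltra K ≃ₜ Y) := by
  have hfc : ∀ a ∈ K, IsClosed (f '' a) := fun a ha =>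
    ((hclosed a ha).isCompact.image hf).isClosed
  have hsep : ∀ a ∈ K, ∀ y, y ∉ f '' a → ∃ b ∈ K, f ⁻¹' {y} ⊆ b ∧ a ∩ b = ∅ := by
    intro a ha y hy
    obtain ⟨A, hA, W, hW, h1, h2, h3⟩ := hgood (f '' a)ᶜ {y} (hfc a ha).isOpen_compl
      isCompact_singleton (by simpa using hy)
    refine ⟨A, hA, (preimage_mono h1).trans h2, ?_⟩
    ext z
    simp only [mem_inter_iff, mem_empty_iff_false, iff_false, not_and]
    intro hz hz'
    exact h3 hz' (mem_image_of_mem f hz)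
  let g : Y → LUltra K := fun y =>
    { sets := {a | a ∈ K ∧ y ∈ f '' a}
      sets_subset := fun a h => h.1
      univ_mem := ⟨huniv, by simpa using hsurj y⟩
      empty_notMem := by simp
      inter_mem := by
        rintro a ⟨ha, hya⟩ b ⟨hb, hyb⟩
        refine ⟨hinter a ha b hb, ?_⟩
        by_contra hcon
        obtain ⟨c, hc, hyc, h1⟩ := hsep _ (hinter a ha b hb) y hcon
        have h2 : y ∉ f '' (c ∩ a) := by
          rintro ⟨z, hz, rfl⟩
          obtain ⟨z', hz', h⟩ := hyb
          refine hdisj _ (hinter c hc a ha) b hb ?_ z hz z' hz' h.symm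
          rw [← h1, inter_assoc, inter_comm]
        obtain ⟨d, hd, hyd, h3⟩ := hsep _ (hinter c hc a ha) y h2
        obtain ⟨z, rfl⟩ := hsurj y
        obtain ⟨z', hz', h⟩ := hya
        refine hdisj _ (hinter c hc d hd) a ha ?_ z ⟨hyc rfl, hyd rfl⟩ z' hz' h.symm
        rw [← h3, inter_assoc, inter_assoc, inter_comm a d]
      superset_mem := fun a ha b hb hab => ⟨hb, image_mono hab ha.2⟩
      ultra := by
        intro a ha hya
        obtain ⟨b, hb, hyb, h⟩ := hsep a ha y (fun h => hya ⟨ha, h⟩)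
        obtain ⟨z, rfl⟩ := hsurj y
        exact ⟨b, ⟨hb, z, hyb rfl, rfl⟩, h⟩ }
  have hg : ∀ y a, a ∈ (g y).sets ↔ a ∈ K ∧ y ∈ f '' a := fun y a => Iff.rfl
  have ext' : ∀ u w : LUltra K, u.sets = w.sets → u = w := by
    rintro ⟨⟩ ⟨⟩ h
    simp only at h
    subst h
    rfl
  have hinj : Function.Injective g := by
    intro y y' h
    by_contra hne
    obtain ⟨A, hA, W, hW, h1, h2, h3⟩ := hgood {y'}ᶜ {y} isOpen_compl_singleton
      isCompact_singleton (fun w hw hw' => hne (hw.symm.trans hw'))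
    obtain ⟨z, rfl⟩ := hsurj y
    have : A ∈ (g (f z)).sets := ⟨hA, z, h2 (h1 rfl), rfl⟩
    rw [h] at this
    obtain ⟨z', hz', h'⟩ := this.2
    exact h3 hz' h'
  have hgsurj : Function.Surjective g := by
    intro u
    have : (⋂ a : u.sets, (a : Set Z)).Nonempty := by
      have : Nonempty u.sets := ⟨⟨_, u.univ_mem⟩⟩
      apply IsCompact.nonempty_iInter_of_directed_nonempty_isCompact_isClosed
      · rintro ⟨a, ha⟩ ⟨b, hb⟩
        exact ⟨⟨_, u.inter_mem a ha b hb⟩, inter_subset_left, inter_subset_right⟩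
      · rintro ⟨a, ha⟩
        rw [nonempty_iff_ne_empty]
        rintro rfl
        exact u.empty_notMem ha
      · rintro ⟨a, ha⟩
        exact (hclosed a (u.sets_subset ha)).isCompact
      · rintro ⟨a, ha⟩
        exact hclosed a (u.sets_subset ha)
    obtain ⟨z, hz⟩ := this
    rw [mem_iInter] at hz
    refine ⟨f z, ext' _ _ ?_⟩
    ext a
    rw [hg]
    constructor
    · rintro ⟨ha, z', hz', h⟩
      by_contra hau
      obtain ⟨b, hb, hab⟩ := u.ultra a ha hau
      exact hdisj a ha b (u.sets_subset hb) hab z' hz' z (hz ⟨b, hb⟩) h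
    · intro ha
      exact ⟨u.sets_subset ha, z, hz ⟨a, ha⟩, rfl⟩
  let e : Y ≃ LUltra K := Equiv.ofBijective g ⟨hinj, hgsurj⟩
  have hgc : Continuous g := by
    refine continuous_generateFrom_iff.2 ?_
    rintro s ⟨a, ha, rfl⟩
    have : g ⁻¹' {u : LUltra K | a ∈ u.sets}ᶜ = (f '' a)ᶜ := by
      ext y
      simp only [mem_preimage, mem_compl_iff]
      exact not_congr ⟨fun h => h.2, fun h => ⟨ha, h⟩⟩
    rw [this]
    exact (hfc a ha).isOpen_compl
  have hgo : IsOpenMap g := by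
    intro U hU
    rw [isOpen_iff_forall_mem_open]
    rintro _ ⟨y, hy, rfl⟩
    obtain ⟨A, hA, W, hW, h1, h2, h3⟩ := hgood {y}ᶜ Uᶜ isOpen_compl_singleton
      hU.isClosed_compl.isCompact (by simpa using hy)
    refine ⟨{u : LUltra K | A ∈ u.sets}ᶜ, ?_, isOpen_generateFrom_of_mem ⟨A, hA, rfl⟩, ?_⟩
    · intro u hu
      obtain ⟨y', rfl⟩ := hgsurj u
      refine ⟨y', ?_, rfl⟩
      by_contra hy'
      obtain ⟨z, rfl⟩ := hsurj y'
      exact hu ⟨hA, z, h2 (h1 hy'), rfl⟩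
    · rintro ⟨_, z, hz, h⟩
      exact h3 hz h
  exact ⟨(e.toHomeomorphOfContinuousOpen hgc hgo).symm⟩

end Good

section Hyper
variable {X : Type u} [TopologicalSpace X]

theorem isOpen_inside {U : Set X} (hU : IsOpen U) : IsOpen {A : Subcontinua X | A.1 ⊆ U} :=
  isOpen_generateFrom_of_mem (Or.inl ⟨U, hU, rfl⟩)

theorem isOpen_hit {U : Set X} (hU : IsOpen U) :
    IsOpen {A : Subcontinua X | (A.1 ∩ U).Nonempty} :=
  isOpen_generateFrom_of_mem (Or.inr ⟨U, hU, rfl⟩)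

theorem isClosed_inside {C : Set X} (hC : IsClosed C) :
    IsClosed {A : Subcontinua X | A.1 ⊆ C} := by
  rw [← isOpen_compl_iff]
  convert isOpen_hit hC.isOpen_compl using 1
  ext A
  exact Set.not_subset

theorem isClosed_hit {C : Set X} (hC : IsClosed C) :
    IsClosed {A : Subcontinua X | (A.1 ∩ C).Nonempty} := by
  rw [← isOpen_compl_iff]
  convert isOpen_inside hC.isOpen_compl using 1
  ext A
  change ¬ (A.1 ∩ C).Nonempty ↔ A.1 ⊆ Cᶜ
  rw [not_nonempty_iff_eq_empty, subset_compl_iff_disjoint_right, disjoint_iff_inter_eq_empty]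

theorem subcontinua_t2 [CompactSpace X] [T2Space X] : T2Space (Subcontinua X) := by
  have key : ∀ H H' : Subcontinua X, ¬ H.1 ⊆ H'.1 →
      ∃ U V : Set (Subcontinua X), IsOpen U ∧ IsOpen V ∧ H ∈ U ∧ H' ∈ V ∧ Disjoint U V := by
    intro H H' h
    obtain ⟨x, hx, hx'⟩ := Set.not_subset.1 h
    obtain ⟨U, V, hU, hV, hxU, hHV, hUV⟩ := SeparatedNhds.of_isCompact_isCompact
      (isCompact_singleton (x := x)) H'.2.1.isCompact (by simpa using hx')
    refine ⟨_, _, isOpen_hit hU, isOpen_inside hV, ⟨x, hx, hxU rfl⟩, hHV, ?_⟩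
    rw [Set.disjoint_left]
    rintro G ⟨y, hyG, hyU⟩ hGV
    exact Set.disjoint_left.1 hUV hyU (hGV hyG)
  refine ⟨fun H H' hne => ?_⟩
  by_cases h : H.1 ⊆ H'.1
  · have h' : ¬ H'.1 ⊆ H.1 := fun h' => hne (Subtype.ext (h.antisymm h'))
    obtain ⟨U, V, h1, h2, h3, h4, h5⟩ := key H' H h'
    exact ⟨V, U, h2, h1, h4, h3, h5.symm⟩
  · exact key H H' h

theorem subcontinua_compact [CompactSpace X] [T2Space X] : CompactSpace (Subcontinua X) := by
  refine ⟨isCompact_iff_ultrafilter_le_nhds.2 fun F _ => ?_⟩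
  let G : Set X := {x | ∀ U, IsOpen U → x ∈ U → {A : Subcontinua X | (A.1 ∩ U).Nonempty} ∈ F}
  have hcl : IsClosed G := by
    rw [← isOpen_compl_iff, isOpen_iff_forall_mem_open]
    intro x hx
    have hx' : ¬ ∀ U, IsOpen U → x ∈ U → {A : Subcontinua X | (A.1 ∩ U).Nonempty} ∈ F := hx
    push Not at hx'
    obtain ⟨U, hU, hxU, h⟩ := hx'
    exact ⟨U, fun y hy hyG => h (hyG U hU hy), hU, hxU⟩
  have hsub : ∀ U, IsOpen U → G ⊆ U → {A : Subcontinua X | A.1 ⊆ U} ∈ F := by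
    intro U hU hGU
    have : {A : Subcontinua X | A.1 ∩ Uᶜ = ∅} ∈ F := by
      refine hU.isClosed_compl.isCompact.induction_on
        (p := fun s => {A : Subcontinua X | A.1 ∩ s = ∅} ∈ F) ?_ ?_ ?_ ?_
      · simp only [inter_empty]
        exact Filter.univ_mem
      · intro s t hst ht
        filter_upwards [ht] with A hA
        exact subset_empty_iff.1 (hA ▸ inter_subset_inter_right _ hst)
      · intro s t hs ht
        filter_upwards [hs, ht] with A hA hA'
        rw [inter_union_distrib_left]
        simp [show A.1 ∩ s = ∅ from hA, show A.1 ∩ t = ∅ from hA']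
      · intro x hx
        have hx' : ¬ ∀ U, IsOpen U → x ∈ U → {A : Subcontinua X | (A.1 ∩ U).Nonempty} ∈ F :=
          fun h => hx (hGU h)
        push Not at hx'
        obtain ⟨V, hV, hxV, h⟩ := hx'
        refine ⟨V, mem_nhdsWithin_of_mem_nhds (hV.mem_nhds hxV), ?_⟩
        have := Ultrafilter.compl_mem_iff_notMem.2 h
        filter_upwards [this] with A hA
        exact not_nonempty_iff_eq_empty.1 hA
    filter_upwards [this] with A hA
    change A.1 ⊆ U
    rwa [← disjoint_compl_right_iff_subset, disjoint_iff_inter_eq_empty]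
  have hne : G.Nonempty := by
    rw [nonempty_iff_ne_empty]
    intro h
    obtain ⟨A, hA⟩ := F.nonempty_of_mem (hsub ∅ isOpen_empty h.subset)
    exact A.2.2.nonempty.ne_empty (subset_empty_iff.1 hA)
  have hpre : IsPreconnected G := by
    rw [isPreconnected_iff_subset_of_fully_disjoint_closed hcl]
    intro a b ha hb hab hdisj
    obtain ⟨U, V, hU, hV, haU, hbV, hUV⟩ := SeparatedNhds.of_isCompact_isCompact
      ha.isCompact hb.isCompact hdisj
    have h1 := hsub (U ∪ V) (hU.union hV) (hab.trans (union_subset_union haU hbV))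
    have h2 : {A : Subcontinua X | A.1 ⊆ U} ∪ {A : Subcontinua X | A.1 ⊆ V} ∈ F := by
      filter_upwards [h1] with A hA
      exact A.2.2.isPreconnected.subset_or_subset hU hV hUV hA
    rcases Ultrafilter.union_mem_iff.1 h2 with h3 | h3
    · left
      intro x hx
      rcases hab hx with h | h
      · exact h
      · exfalso
        obtain ⟨A, ⟨y, hyA, hyV⟩, hAU⟩ := F.nonempty_of_mem (Filter.inter_mem (hx V hV (hbV h)) h3)
        exact Set.disjoint_left.1 hUV (hAU hyA) hyV
    · right
      intro x hx
      rcases hab hx with h | h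
      · exfalso
        obtain ⟨A, ⟨y, hyA, hyV⟩, hAU⟩ := F.nonempty_of_mem (Filter.inter_mem (hx U hU (haU h)) h3)
        exact Set.disjoint_left.1 hUV hyV (hAU hyA)
      · exact h
  have hconn : IsConnected G := ⟨hne, hpre⟩
  let g : Subcontinua X := Subtype.mk G ⟨hcl, hconn⟩
  refine ⟨g, mem_univ _, ?_⟩
  refine le_of_le_of_eq ?_ nhds_generateFrom.symm
  refine le_iInf₂ fun s hs => ?_
  rw [Filter.le_principal_iff]
  obtain ⟨hGs, ⟨U, hU, rfl⟩ | ⟨U, hU, rfl⟩⟩ := hs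
  · exact hsub U hU hGs
  · obtain ⟨x, hx, hxU⟩ := hGs
    exact hx U hU hxU

end Hyper

section Wallman
variable {X : Type u} [TopologicalSpace X]

structure NLat (L : Set (Set X)) : Prop where
  closed : ∀ a ∈ L, IsClosed a
  empty : ∅ ∈ L
  univ : Set.univ ∈ L
  union : ∀ a ∈ L, ∀ b ∈ L, a ∪ b ∈ L
  inter : ∀ a ∈ L, ∀ b ∈ L, a ∩ b ∈ L
  normal : ∀ a ∈ L, ∀ b ∈ L, a ∩ b = ∅ →
    ∃ c ∈ L, ∃ d ∈ L, (∀ x, x ∈ c ∨ x ∈ d) ∧ (∀ x, x ∈ a → x ∉ c) ∧ (∀ x, x ∈ b → x ∉ d)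

theorem inter_eq_empty_iff' {α : Type*} {a b : Set α} : a ∩ b = ∅ ↔ ∀ x ∈ a, x ∉ b := by
  rw [← disjoint_iff_inter_eq_empty, Set.disjoint_left]

/-- The natural quotient map from `X` to the Wallman space of a normal lattice. -/
def qmap {L : Set (Set X)} (hL : NLat L) (x : X) : LUltra L where
  sets := {a | a ∈ L ∧ ∀ b ∈ L, a ∩ b = ∅ → x ∉ b}
  sets_subset := fun a h => h.1
  univ_mem := ⟨hL.univ, fun b hb h => by
    rw [univ_inter] at h
    simp [h]⟩
  empty_notMem := fun h => h.2 _ hL.univ (by simp) (mem_univ x)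
  inter_mem := by
    rintro a ⟨ha, hxa⟩ b ⟨hb, hxb⟩
    refine ⟨hL.inter a ha b hb, fun e he h hx => ?_⟩
    obtain ⟨c, hc, d, hd, h1, h2, h3⟩ := hL.normal (a ∩ e) (hL.inter a ha e he) b hb (by
      rw [← h, inter_assoc, inter_assoc, inter_comm e b])
    have hxd : x ∉ d := hxb d hd (inter_eq_empty_iff'.2 h3)
    have hxc : x ∈ c := (h1 x).resolve_right hxd
    exact hxa (e ∩ c) (hL.inter e he c hc)
      (inter_eq_empty_iff'.2 fun y hy hy' => h2 y ⟨hy, hy'.1⟩ hy'.2) ⟨hx, hxc⟩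
  superset_mem := by
    rintro a ⟨ha, hxa⟩ b hb hab
    refine ⟨hb, fun c hc h => hxa c hc ?_⟩
    exact subset_empty_iff.1 (h ▸ inter_subset_inter_left c hab)
  ultra := by
    intro a ha h
    have : ¬ ∀ b ∈ L, a ∩ b = ∅ → x ∉ b := fun h' => h ⟨ha, h'⟩
    push Not at this
    obtain ⟨b, hb, hab, hx⟩ := this
    refine ⟨b, ⟨hb, fun c hc h hxc => ?_⟩, hab⟩
    exact inter_eq_empty_iff'.1 h x hx hxc

variable {L : Set (Set X)}

theorem mem_qmap (hL : NLat L) {x : X} {a : Set X} (ha : a ∈ L) (hx : x ∈ a) : a ∈ (qmap hL x).sets :=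
  ⟨ha, fun _ _ h hxb => inter_eq_empty_iff'.1 h x hx hxb⟩

theorem LUltra.not_disj {α : Type u} {F : Set (Set α)} (u : LUltra F) {a b : Set α}
    (ha : a ∈ u.sets) (hb : b ∈ u.sets) : a ∩ b ≠ ∅ := fun h =>
  u.empty_notMem (h ▸ u.inter_mem a ha b hb)

theorem LUltra.eq_of_subset {α : Type u} {F : Set (Set α)} {u w : LUltra F}
    (h : u.sets ⊆ w.sets) : u = w := by
  have h' : u.sets = w.sets := by
    refine h.antisymm fun a ha => ?_
    by_contra hau
    obtain ⟨b, hb, hab⟩ := u.ultra a (w.sets_subset ha) hau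
    exact w.not_disj ha (h hb) hab
  cases u
  cases w
  simp only at h'
  subst h'
  rfl

theorem qmap_lift [CompactSpace X] (hL : NLat L) (u : LUltra L) :
    ∃ x, qmap hL x = u ∧ ∀ a ∈ u.sets, x ∈ a := by
  have : (⋂ a : u.sets, (a : Set X)).Nonempty := by
    have : Nonempty u.sets := ⟨⟨_, u.univ_mem⟩⟩
    apply IsCompact.nonempty_iInter_of_directed_nonempty_isCompact_isClosed
    · rintro ⟨a, ha⟩ ⟨b, hb⟩
      exact ⟨⟨_, u.inter_mem a ha b hb⟩, inter_subset_left, inter_subset_right⟩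
    · rintro ⟨a, ha⟩
      rw [nonempty_iff_ne_empty]
      rintro rfl
      exact u.empty_notMem ha
    · rintro ⟨a, ha⟩
      exact (hL.closed a (u.sets_subset ha)).isCompact
    · rintro ⟨a, ha⟩
      exact hL.closed a (u.sets_subset ha)
  obtain ⟨x, hx⟩ := this
  rw [mem_iInter] at hx
  refine ⟨x, (LUltra.eq_of_subset fun a ha => ?_).symm, fun a ha => hx ⟨a, ha⟩⟩
  exact mem_qmap hL (u.sets_subset ha) (hx ⟨a, ha⟩)

theorem isOpen_hat_compl {a : Set X} (ha : a ∈ L) : IsOpen {u : LUltra L | a ∈ u.sets}ᶜ :=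
  isOpen_generateFrom_of_mem ⟨a, ha, rfl⟩

theorem isClosed_hat {a : Set X} (ha : a ∈ L) : IsClosed {u : LUltra L | a ∈ u.sets} :=
  ⟨isOpen_hat_compl ha⟩

theorem qmap_continuous (hL : NLat L) : Continuous (qmap hL) := by
  refine continuous_generateFrom_iff.2 ?_
  rintro s ⟨a, ha, rfl⟩
  rw [isOpen_iff_forall_mem_open]
  intro x hx
  obtain ⟨b, hb, hab⟩ := (qmap hL x).ultra a ha hx
  obtain ⟨c, hc, d, hd, h1, h2, h3⟩ := hL.normal a ha b hb.1 hab
  have hxd : x ∉ d := hb.2 d hd (inter_eq_empty_iff'.2 h3)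
  refine ⟨dᶜ, fun y hy hya => ?_, (hL.closed d hd).isOpen_compl, hxd⟩
  exact LUltra.not_disj _ hya (mem_qmap hL hc ((h1 y).resolve_right hy))
    (inter_eq_empty_iff'.2 h2)

theorem wallman_compact [CompactSpace X] (hL : NLat L) : CompactSpace (LUltra L) := by
  have hs : Function.Surjective (qmap hL) := fun u => (qmap_lift hL u).imp fun _ h => h.1
  refine ⟨?_⟩
  rw [← hs.range_eq]
  exact isCompact_range (qmap_continuous hL)

theorem hat_union [CompactSpace X] (hL : NLat L) (u : LUltra L) {a b : Set X} (ha : a ∈ L) (hb : b ∈ L)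
    (h : a ∪ b ∈ u.sets) : a ∈ u.sets ∨ b ∈ u.sets := by
  obtain ⟨x, rfl, hx⟩ := qmap_lift hL u
  rcases hx _ h with h | h
  · exact Or.inl (mem_qmap hL ha h)
  · exact Or.inr (mem_qmap hL hb h)

theorem wallman_t2 [CompactSpace X] (hL : NLat L) : T2Space (LUltra L) := by
  refine ⟨fun u w hne => ?_⟩
  have : ¬ u.sets ⊆ w.sets := fun h => hne (LUltra.eq_of_subset h)
  obtain ⟨a, ha, haw⟩ := Set.not_subset.1 this
  obtain ⟨b, hb, hab⟩ := w.ultra a (u.sets_subset ha) haw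
  obtain ⟨c, hc, d, hd, h1, h2, h3⟩ := hL.normal a (u.sets_subset ha) b (w.sets_subset hb) hab
  refine ⟨_, _, isOpen_hat_compl hc, isOpen_hat_compl hd, ?_, ?_, ?_⟩
  · exact fun h => u.not_disj ha h (inter_eq_empty_iff'.2 h2)
  · exact fun h => w.not_disj hb h (inter_eq_empty_iff'.2 h3)
  · rw [Set.disjoint_left]
    intro v hv hv'
    have : c ∪ d ∈ v.sets := by
      have h : c ∪ d = Set.univ := eq_univ_of_forall h1
      rw [h]
      exact v.univ_mem
    rcases hat_union hL v hc hd this with h | h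
    · exact hv h
    · exact hv' h

theorem qmap_good [CompactSpace X] (hL : NLat L) (U C : Set (LUltra L)) (hU : IsOpen U) (hC : IsCompact C)
    (hCU : C ⊆ U) :
    ∃ A ∈ L, ∃ W, IsOpen W ∧ C ⊆ W ∧ qmap hL ⁻¹' W ⊆ A ∧ A ⊆ qmap hL ⁻¹' U := by
  refine good_of_subbasis (qmap hL) L hL.empty hL.univ hL.union hL.inter _ rfl ?_ U C hU hC hCU
  rintro _ ⟨b, hb, rfl⟩ u hu
  obtain ⟨c, hc, hbc⟩ := u.ultra b hb hu
  obtain ⟨e, he, d, hd, h1, h2, h3⟩ := hL.normal b hb c (u.sets_subset hc) hbc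
  refine ⟨e, he, _, isOpen_hat_compl hd, ?_, ?_, ?_⟩
  · exact fun h => u.not_disj hc h (inter_eq_empty_iff'.2 h3)
  · intro x hx
    by_contra hxe
    exact hx (mem_qmap hL hd ((h1 x).resolve_left hxe))
  · intro x hx hxb
    exact LUltra.not_disj _ hxb (mem_qmap hL he hx) (inter_eq_empty_iff'.2 h2)

/-- Clopen decompositions can be reflected into `L`. -/
def HPart (L : Set (Set X)) : Prop :=
  ∀ (n : ℕ) (t : Set X) (s Z Z' : Fin n → Set X), t ∈ L → (∀ j, s j ∈ L) →
    (∀ j, IsClosed (Z j)) → (∀ j, IsClosed (Z' j)) →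
    (∀ p, (p ∈ t → ∃ j, p ∈ Z j) ∧ ∀ j, (p ∈ t → p ∈ Z j ∨ p ∈ Z' j) ∧
      ¬ (p ∈ Z j ∧ p ∈ Z' j) ∧ ¬ (p ∈ Z j ∧ p ∈ s j)) →
    ∃ Y Y' : Fin n → Set X, (∀ j, Y j ∈ L) ∧ (∀ j, Y' j ∈ L) ∧
      (∀ p, (p ∈ t → ∃ j, p ∈ Y j) ∧ ∀ j, (p ∈ t → p ∈ Y j ∨ p ∈ Y' j) ∧
        ¬ (p ∈ Y j ∧ p ∈ Y' j) ∧ ¬ (p ∈ Y j ∧ p ∈ s j))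

theorem clopen_sep [CompactSpace X] [T2Space X] {ι : Type*} (t : Set X) (ht : IsClosed t)
    (s : ι → Set X) (hs : ∀ i, IsClosed (s i))
    (h : ∀ G : Subcontinua X, G.1 ⊆ t → ∃ i, G.1 ∩ s i = ∅) (x : X) (hx : x ∈ t) :
    ∃ (Z Z' : Set X) (i : ι), IsClosed Z ∧ IsClosed Z' ∧ Z ∪ Z' = t ∧ Z ∩ Z' = ∅ ∧
      Z ∩ s i = ∅ ∧ Z ∈ nhdsWithin x t := by
  have : CompactSpace t := isCompact_iff_compactSpace.1 ht.isCompact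
  let x' : t := ⟨x, hx⟩
  have hcc : IsConnected ((↑) '' connectedComponent x' : Set X) :=
    isConnected_connectedComponent.image _ continuous_subtype_val.continuousOn
  have hcl : IsClosed ((↑) '' connectedComponent x' : Set X) :=
    ht.isClosedEmbedding_subtypeVal.isClosedMap _ isClosed_connectedComponent
  obtain ⟨i, hi⟩ := h ⟨_, hcl, hcc⟩ (by
    rintro _ ⟨y, _, rfl⟩
    exact y.2)
  have h1 : ((↑) ⁻¹' (s i) : Set t) ∩ ⋂ c : { c : Set t // IsClopen c ∧ x' ∈ c }, (c : Set t) = ∅ := by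
    rw [← connectedComponent_eq_iInter_isClopen]
    refine inter_eq_empty_iff'.2 fun y hy hy' => ?_
    exact inter_eq_empty_iff'.1 hi y.1 ⟨y, hy', rfl⟩ hy
  have : Nonempty { c : Set t // IsClopen c ∧ x' ∈ c } := ⟨⟨_, isClopen_univ, mem_univ _⟩⟩
  obtain ⟨⟨c, hc, hxc⟩, h2⟩ := IsCompact.elim_directed_family_closed
    ((hs i).preimage continuous_subtype_val).isCompact _
    (fun c : { c : Set t // IsClopen c ∧ x' ∈ c } => c.2.1.isClosed) h1 (by
      rintro ⟨a, ha, hxa⟩ ⟨b, hb, hxb⟩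
      exact ⟨⟨a ∩ b, ha.inter hb, hxa, hxb⟩, inter_subset_left, inter_subset_right⟩)
  refine ⟨(↑) '' c, (↑) '' cᶜ, i, ht.isClosedEmbedding_subtypeVal.isClosedMap _ hc.isClosed,
    ht.isClosedEmbedding_subtypeVal.isClosedMap _ hc.compl.isClosed, ?_, ?_, ?_, ?_⟩
  · rw [← image_union, union_compl_self, image_univ, Subtype.range_coe]
  · rw [← image_inter Subtype.val_injective, inter_compl_self, image_empty]
  · refine inter_eq_empty_iff'.2 ?_
    rintro _ ⟨y, hy, rfl⟩ hy'
    exact inter_eq_empty_iff'.1 h2 y hy' hy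
  · have := hc.isOpen.mem_nhds hxc
    exact (nhdsWithin_eq_map_subtype_coe hx) ▸ Filter.image_mem_map this

theorem hat_connected_lift [CompactSpace X] [T2Space X] (hL : NLat L) (hpart : HPart L)
    (H : Subcontinua (LUltra L)) (t : Set X) (ht : t ∈ L) (hHt : ∀ u ∈ H.1, t ∈ u.sets) :
    ∃ G : Subcontinua X, G.1 ⊆ t ∧
      ∀ c ∈ L, (∃ u ∈ H.1, c ∈ u.sets) → (G.1 ∩ c).Nonempty := by
  by_contra hcon
  let ι := {c : Set X // c ∈ L ∧ ∃ u ∈ H.1, c ∈ u.sets}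
  have h1 : ∀ G : Subcontinua X, G.1 ⊆ t → ∃ i : ι, G.1 ∩ i.1 = ∅ := by
    intro G hG
    by_contra h
    push Not at h
    exact hcon ⟨G, hG, fun c hc hcH => h ⟨c, hc, hcH⟩⟩
  have h2 := clopen_sep t (hL.closed t ht) (fun i : ι => i.1) (fun i => hL.closed _ i.2.1) h1
  choose Z Z' i hZ hZ' hu hd hs hn using h2
  obtain ⟨T, hT⟩ := (hL.closed t ht).isCompact.elim_nhdsWithin_subcover' Z hn
  let g : Fin T.card → t := fun j => (T.equivFin.symm j).1
  obtain ⟨Y, Y', hY, hY', h3⟩ := hpart T.card t (fun j => (i (g j).1 (g j).2).1)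
    (fun j => Z (g j).1 (g j).2) (fun j => Z' (g j).1 (g j).2) ht
    (fun j => (i (g j).1 (g j).2).2.1) (fun j => hZ _ _) (fun j => hZ' _ _) (by
      intro p
      refine ⟨fun hp => ?_, fun j => ⟨fun hp => ?_, ?_, ?_⟩⟩
      · have := hT hp
        simp only [mem_iUnion] at this
        obtain ⟨y, hy, hp⟩ := this
        refine ⟨T.equivFin ⟨y, hy⟩, ?_⟩
        have hg : g (T.equivFin ⟨y, hy⟩) = y := by simp [g]
        have hz : ∀ y' : t, y' = y → p ∈ Z y'.1 y'.2 := by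
          rintro _ rfl
          exact hp
        exact hz _ hg
      · rw [← hu _ (g j).2] at hp
        exact hp
      · exact fun h => inter_eq_empty_iff'.1 (hd _ (g j).2) p h.1 h.2
      · exact fun h => inter_eq_empty_iff'.1 (hs _ (g j).2) p h.1 h.2)
  have h4 : ∀ j, ∀ u ∈ H.1, Y' j ∈ u.sets := by
    intro j
    have := isPreconnected_iff_subset_of_disjoint_closed.1 H.2.2.isPreconnected
      _ _ (isClosed_hat (hY j)) (isClosed_hat (hY' j)) (by
        intro u hu
        refine hat_union hL u (hY j) (hY' j)
          (u.superset_mem t (hHt u hu) _ (hL.union _ (hY j) _ (hY' j)) fun p hp => ?_)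
        exact ((h3 p).2 j).1 hp) (by
        refine inter_eq_empty_iff'.2 fun u _ hu => ?_
        refine u.not_disj hu.1 hu.2 (inter_eq_empty_iff'.2 fun p hp hp' => ?_)
        exact ((h3 p).2 j).2.1 ⟨hp, hp'⟩)
    rcases this with h | h
    · exfalso
      obtain ⟨u, hu, hc⟩ := (i (g j).1 (g j).2).2.2
      refine u.not_disj (h hu) hc (inter_eq_empty_iff'.2 fun p hp hp' => ?_)
      exact ((h3 p).2 j).2.2 ⟨hp, hp'⟩
    · exact fun u hu => h hu
  obtain ⟨u, hu⟩ := H.2.2.nonempty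
  obtain ⟨x, hxu, hx⟩ := qmap_lift hL u
  obtain ⟨j, hj⟩ := (h3 x).1 (hx t (hHt u hu))
  exact ((h3 x).2 j).2.1 ⟨hj, hx _ (h4 j u hu)⟩

/-- Canonical lifts of subcontinua of the Wallman space. -/
theorem subcontinuum_lift [CompactSpace X] [T2Space X] (hL : NLat L) (hpart : HPart L)
    (H : Subcontinua (LUltra L)) :
    ∃ G : Subcontinua X, (∀ t ∈ L, (∀ u ∈ H.1, t ∈ u.sets) → G.1 ⊆ t) ∧
      ∀ c ∈ L, (∃ u ∈ H.1, c ∈ u.sets) → (G.1 ∩ c).Nonempty := by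
  have := subcontinua_compact (X := X)
  let I := {t : Set X // t ∈ L ∧ ∀ u ∈ H.1, t ∈ u.sets}
  let D : I → Set (Subcontinua X) := fun t => {G | G.1 ⊆ t.1} ∩
    ⋂ c : {c : Set X // c ∈ L ∧ ∃ u ∈ H.1, c ∈ u.sets}, {G | (G.1 ∩ c.1).Nonempty}
  have hD : ∀ t, IsClosed (D t) := fun t => (isClosed_inside (hL.closed _ t.2.1)).inter
    (isClosed_iInter fun c => isClosed_hit (hL.closed _ c.2.1))
  have : Nonempty I := ⟨⟨Set.univ, hL.univ, fun u _ => u.univ_mem⟩⟩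
  have hne : (⋂ t, D t).Nonempty := by
    apply IsCompact.nonempty_iInter_of_directed_nonempty_isCompact_isClosed
    · rintro ⟨a, ha, ha'⟩ ⟨b, hb, hb'⟩
      refine ⟨⟨a ∩ b, hL.inter a ha b hb, fun u hu => u.inter_mem a (ha' u hu) b (hb' u hu)⟩,
        ?_, ?_⟩
      · exact inter_subset_inter_left _ fun G hG => Subset.trans hG inter_subset_left
      · exact inter_subset_inter_left _ fun G hG => Subset.trans hG inter_subset_right
    · rintro ⟨t, ht, ht'⟩
      obtain ⟨G, h1, h2⟩ := hat_connected_lift hL hpart H t ht ht'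
      exact ⟨G, h1, mem_iInter.2 fun c => h2 c.1 c.2.1 c.2.2⟩
    · exact fun t => (hD t).isCompact
    · exact hD
  obtain ⟨G, hG⟩ := hne
  rw [mem_iInter] at hG
  refine ⟨G, fun t ht ht' => (hG ⟨t, ht, ht'⟩).1, fun c hc hc' => ?_⟩
  exact mem_iInter.1 (hG (Classical.arbitrary I)).2 ⟨c, hc, hc'⟩

theorem main_top [CompactSpace X] [T2Space X] (hL : NLat L) (hpart : HPart L) (K : Set (Set (Subcontinua X)))
    (hKrep : ∀ S ∈ K, HasRep L S) (hempty : ∅ ∈ K) (huniv : Set.univ ∈ K)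
    (hunion : ∀ a ∈ K, ∀ b ∈ K, a ∪ b ∈ K) (hinter : ∀ a ∈ K, ∀ b ∈ K, a ∩ b ∈ K)
    (hclosed : ∀ a ∈ K, IsClosed a)
    (hin : ∀ a ∈ L, {G : Subcontinua X | G.1 ⊆ a} ∈ K)
    (hhit : ∀ a ∈ L, {G : Subcontinua X | (G.1 ∩ a).Nonempty} ∈ K) :
    Nonempty (LUltra K ≃ₜ Subcontinua (LUltra L)) := by
  have i1 := subcontinua_compact (X := X)
  have i2 := wallman_compact hL
  have i3 := wallman_t2 hL
  have i4 := subcontinua_compact (X := LUltra L)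
  have i5 := subcontinua_t2 (X := LUltra L)
  have hq := qmap_continuous hL
  have hqc : ∀ G : Subcontinua X, IsClosed (qmap hL '' G.1) := fun G =>
    (G.2.1.isCompact.image hq).isClosed
  let f : Subcontinua X → Subcontinua (LUltra L) := fun G =>
    ⟨qmap hL '' G.1, hqc G, G.2.2.image _ hq.continuousOn⟩
  have hf1 : ∀ G, (f G).1 = qmap hL '' G.1 := fun G => rfl
  have hf : Continuous f := by
    refine continuous_generateFrom_iff.2 ?_
    rintro s (⟨U, hU, rfl⟩ | ⟨U, hU, rfl⟩)
    · convert isOpen_inside (hU.preimage hq) using 1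
      ext G
      exact image_subset_iff
    · convert isOpen_hit (hU.preimage hq) using 1
      ext G
      exact image_inter_nonempty_iff
  have hsurj : Function.Surjective f := by
    intro H
    obtain ⟨G, h1, h2⟩ := subcontinuum_lift hL hpart H
    refine ⟨G, Subtype.ext ?_⟩
    rw [hf1]
    apply Subset.antisymm
    · rintro _ ⟨x, hx, rfl⟩
      by_contra hxH
      obtain ⟨A, hA, W, hW, h3, h4, h5⟩ := qmap_good hL {qmap hL x}ᶜ H.1 isOpen_compl_singleton
        H.2.1.isCompact (fun u hu hu' => hxH (by rw [← show u = qmap hL x from hu']; exact hu))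
      refine h5 (h1 A hA (fun u hu => ?_) hx) rfl
      obtain ⟨y, rfl, _⟩ := qmap_lift hL u
      exact mem_qmap hL hA (h4 (h3 hu))
    · intro u hu
      by_contra hcon
      obtain ⟨A, hA, W, hW, h3, h4, h5⟩ := qmap_good hL (qmap hL '' G.1)ᶜ {u}
        (hqc G).isOpen_compl isCompact_singleton (by simpa using hcon)
      have : A ∈ u.sets := by
        obtain ⟨y, rfl, _⟩ := qmap_lift hL u
        exact mem_qmap hL hA (h4 (h3 rfl))
      obtain ⟨x, hxG, hxA⟩ := h2 A hA ⟨u, hu, this⟩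
      exact h5 hxA ⟨x, hxG, rfl⟩
  refine wallman_homeo f hf hsurj K huniv hinter hclosed ?_ ?_
  · have key : ∀ S ∈ K, ∀ G ∈ S, ∀ G' : Subcontinua X,
        (∀ t ∈ L, (∀ u ∈ (f G).1, t ∈ u.sets) → G'.1 ⊆ t) →
        (∀ c ∈ L, (∃ u ∈ (f G).1, c ∈ u.sets) → (G'.1 ∩ c).Nonempty) → G' ∈ S := by
      intro S hS G hG G' h1 h2
      obtain ⟨ι, _, ψ, A, hm, hA, rfl⟩ := hKrep S hS
      refine hm _ _ ?_ hG
      rintro (i | i)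
      · rintro ⟨x, hxG, hxA⟩
        exact h2 _ (hA i) ⟨qmap hL x, ⟨x, hxG, rfl⟩, mem_qmap hL (hA i) hxA⟩
      · intro h
        refine h1 _ (hA i) ?_
        rintro _ ⟨x, hx, rfl⟩
        exact mem_qmap hL (hA i) (h hx)
    intro a ha b hb hab z hz z' hz' h
    obtain ⟨G, h1, h2⟩ := subcontinuum_lift hL hpart (f z)
    have h3 := key a ha z hz G h1 h2
    rw [h] at h1 h2
    have h4 := key b hb z' hz' G h1 h2
    exact inter_eq_empty_iff'.1 hab G h3 h4
  · intro U C hU hC hCU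
    refine good_of_subbasis f K hempty huniv hunion hinter _ rfl ?_ U C hU hC hCU
    rintro _ (⟨V, hV, rfl⟩ | ⟨V, hV, rfl⟩) H hH
    · obtain ⟨A, hA, W, hW, h3, h4, h5⟩ := qmap_good hL V H.1 hV H.2.1.isCompact hH
      refine ⟨_, hin A hA, _, isOpen_inside hW, h3, ?_, ?_⟩
      · intro G hG x hx
        exact h4 (hG ⟨x, hx, rfl⟩)
      · rintro G hG _ ⟨x, hx, rfl⟩
        exact h5 (hG hx)
    · obtain ⟨u, hu, huV⟩ := hH
      obtain ⟨A, hA, W, hW, h3, h4, h5⟩ := qmap_good hL V {u} hV isCompact_singleton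
        (by simpa using huV)
      refine ⟨_, hhit A hA, _, isOpen_hit hW, ⟨u, hu, h3 rfl⟩, ?_, ?_⟩
      · rintro G ⟨_, ⟨x, hx, rfl⟩, hxW⟩
        exact ⟨x, hx, h4 hxW⟩
      · rintro G ⟨x, hx, hxA⟩
        exact ⟨_, ⟨x, hx, rfl⟩, h5 hxA⟩

end Wallman

section Final
variable {X : ZFSet.{0}} [TopologicalSpace ↥X.toSet] {κ : Cardinal.{1}}
  {M : FirstOrder.Language.graph.ElementarySubstructure (HKappa κ)}

theorem nlat_Lfam [CompactSpace ↥X.toSet] [T2Space ↥X.toSet]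
    (hbig : HeredLt κ X.powerset.powerset) (hXM : MemOf κ M X)
    (htopM : MemOf κ M (opensZ X)) : NLat (Lfam X κ M) where
  closed := fun a ha => ha.1
  empty := by
    obtain ⟨B, hB, h⟩ := Lfam_elem hbig hXM htopM (α := Empty) (β := Unit)
      (fun σ => ¬ σ (Sum.inr ())) (fun i => i.elim) (fun i => i.elim) (fun _ => ∅)
      (fun _ => isClosed_empty) (fun p => by simp)
    have : B () = ∅ := eq_empty_of_forall_notMem h
    exact this ▸ hB ()
  univ := by
    obtain ⟨B, hB, h⟩ := Lfam_elem hbig hXM htopM (α := Empty) (β := Unit)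
      (fun σ => σ (Sum.inr ())) (fun i => i.elim) (fun i => i.elim) (fun _ => Set.univ)
      (fun _ => isClosed_univ) (fun p => by simp)
    have : B () = Set.univ := eq_univ_of_forall h
    exact this ▸ hB ()
  union := by
    intro a ha b hb
    obtain ⟨B, hB, h⟩ := Lfam_elem hbig hXM htopM (α := Bool) (β := Unit)
      (fun σ => σ (Sum.inr ()) ↔ σ (Sum.inl true) ∨ σ (Sum.inl false))
      (fun i => if i then a else b) (by simp [ha, hb]) (fun _ => a ∪ b)
      (fun _ => ha.1.union hb.1) (fun p => by simp)
    have : B () = a ∪ b := by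
      ext p
      simpa using h p
    exact this ▸ hB ()
  inter := by
    intro a ha b hb
    obtain ⟨B, hB, h⟩ := Lfam_elem hbig hXM htopM (α := Bool) (β := Unit)
      (fun σ => σ (Sum.inr ()) ↔ σ (Sum.inl true) ∧ σ (Sum.inl false))
      (fun i => if i then a else b) (by simp [ha, hb]) (fun _ => a ∩ b)
      (fun _ => ha.1.inter hb.1) (fun p => by simp)
    have : B () = a ∩ b := by
      ext p
      simpa using h p
    exact this ▸ hB ()
  normal := by
    intro a ha b hb hab
    obtain ⟨U, V, hU, hV, haU, hbV, hUV⟩ := SeparatedNhds.of_isCompact_isCompact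
      ha.1.isCompact hb.1.isCompact (disjoint_iff_inter_eq_empty.2 hab)
    obtain ⟨B, hB, h⟩ := Lfam_elem hbig hXM htopM (α := Bool) (β := Bool)
      (fun σ => (σ (Sum.inr true) ∨ σ (Sum.inr false)) ∧
        (σ (Sum.inl true) → ¬ σ (Sum.inr true)) ∧ (σ (Sum.inl false) → ¬ σ (Sum.inr false)))
      (fun i => if i then a else b) (by simp [ha, hb]) (fun i => if i then Uᶜ else Vᶜ)
      (by simp [hU, hV]) (fun p => by
        have h1 := @haU p
        have h2 := @hbV p
        have h3 : p ∈ U → p ∉ V := fun h => Set.disjoint_left.1 hUV h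
        simp
        tauto)
    refine ⟨B true, hB _, B false, hB _, fun p => ?_, fun p => ?_, fun p => ?_⟩
    · exact (h p).1
    · simpa using (h p).2.1
    · simpa using (h p).2.2

theorem hpart_Lfam (hbig : HeredLt κ X.powerset.powerset) (hXM : MemOf κ M X)
    (htopM : MemOf κ M (opensZ X)) : HPart (Lfam X κ M) := by
  intro n t s Z Z' ht hs hZ hZ' h
  obtain ⟨B, hB, h'⟩ := Lfam_elem hbig hXM htopM (α := Option (Fin n)) (β := Fin n ⊕ Fin n)
    (fun σ => (σ (Sum.inl none) → ∃ j, σ (Sum.inr (Sum.inl j))) ∧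
      ∀ j, (σ (Sum.inl none) → σ (Sum.inr (Sum.inl j)) ∨ σ (Sum.inr (Sum.inr j))) ∧
        ¬ (σ (Sum.inr (Sum.inl j)) ∧ σ (Sum.inr (Sum.inr j))) ∧
        ¬ (σ (Sum.inr (Sum.inl j)) ∧ σ (Sum.inl (some j))))
    (fun o => o.elim t s) (by rintro (_ | j); exacts [ht, hs j])
    (Sum.elim Z Z') (by rintro (j | j); exacts [hZ j, hZ' j]) (fun p => h p)
  exact ⟨fun j => B (Sum.inl j), fun j => B (Sum.inr j), fun j => hB _, fun j => hB _,
    fun p => h' p⟩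

theorem isClosed_of_mem_KStarLat {S : Set (Subcontinua ↥X.toSet)} (hS : S ∈ KStarLat X) :
    IsClosed S := by
  have hS' : LatGen _ S := hS
  clear hS
  induction hS' with
  | base h =>
    obtain ⟨F, hF, rfl⟩ := h
    have : starSet F = {G : Subcontinua ↥X.toSet | (G.1 ∩ ⋂₀ (↑F : Set (Set ↥X.toSet))).Nonempty} ∪
        ⋃ s ∈ F, {G : Subcontinua ↥X.toSet | G.1 ⊆ s} := by
      ext G
      simp only [starSet, mem_setOf_eq, mem_union, mem_iUnion, nonempty_iff_ne_empty, exists_prop]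
      rw [not_and_or]
      push Not
      rfl
    rw [this]
    refine (isClosed_hit (isClosed_sInter hF)).union ?_
    exact isClosed_biUnion_finset fun s hs => isClosed_inside (hF s hs)
  | union _ _ h1 h2 => exact h1.union h2
  | inter _ _ h1 h2 => exact h1.inter h2

theorem inside_mem_KStarLat {a : Set ↥X.toSet} (ha : IsClosed a) :
    {G : Subcontinua ↥X.toSet | G.1 ⊆ a} ∈ KStarLat X := by
  classical
  refine LatGen.base ⟨{a, ∅}, by simp [ha], ?_⟩
  ext G
  have := G.2.2.nonempty.ne_empty
  simp [starSet, this]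

theorem hit_mem_KStarLat {a : Set ↥X.toSet} (ha : IsClosed a) :
    {G : Subcontinua ↥X.toSet | (G.1 ∩ a).Nonempty} ∈ KStarLat X := by
  refine LatGen.base ⟨{a}, by simp [ha], ?_⟩
  ext G
  simp only [starSet, mem_setOf_eq, Finset.coe_singleton, sInter_singleton, Finset.mem_singleton,
    forall_eq, nonempty_iff_ne_empty]
  constructor
  · exact fun h h' => h h'.1
  · intro h h'
    refine h ⟨h', fun hs => ?_⟩
    rw [inter_eq_left.2 hs] at h'
    exact G.2.2.nonempty.ne_empty h'

end Final

/-- For a continuum `X`, a countable elementary submodel `M ≺ H(κ)` with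
`X ∈ M`, `L = 2^X ∩ M`, the lattice `K* ∈ M` generated by the sets `F*` representing
`C(X)`, and `K = K* ∩ M`, the Wallman space `wK` is homeomorphic to `C(wL)`, the
hyperspace of subcontinua of the metric continuum `wL`. -/
theorem wallman_K_homeomorph_hyperspace_wallman_L
    (X : ZFSet.{0}) [TopologicalSpace ↥X.toSet] [CompactSpace ↥X.toSet]
    [T2Space ↥X.toSet] [ConnectedSpace ↥X.toSet]
    (κ : Cardinal.{1}) (hreg : κ.IsRegular) (hbig : HeredLt κ X.powerset.powerset)
    (M : FirstOrder.Language.graph.ElementarySubstructure (HKappa κ))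
    (hMcount : Countable M) (hXM : MemOf κ M X) (htopM : MemOf κ M (opensZ X))
    (hKM : MemOf κ M (codeKStarLat X)) :
    Nonempty (LUltra (Kfam X κ M) ≃ₜ Subcontinua (LUltra (Lfam X κ M))) := by
  have hL := nlat_Lfam (X := X) hbig hXM htopM
  have hiff := mem_Kfam_iff (X := X) hbig hXM htopM hKM
  have hin : ∀ a ∈ Lfam X κ M, {G : Subcontinua ↥X.toSet | G.1 ⊆ a} ∈ Kfam X κ M := by
    intro a ha
    refine (hiff _).2 ⟨inside_mem_KStarLat ha.1, Unit, inferInstance, fun σ => σ (Sum.inr ()),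
      fun _ => a, fun σ τ h => h _, fun _ => ha, rfl⟩
  refine main_top hL (hpart_Lfam hbig hXM htopM) _ (fun S hS => ((hiff S).1 hS).2) ?_ ?_ ?_ ?_ ?_
    hin ?_
  · convert hin ∅ hL.empty using 1
    ext G
    have := G.2.2.nonempty.ne_empty
    simp [this]
  · refine (hiff _).2 ⟨univ_mem_KStarLat, Empty, inferInstance, fun _ => True,
      fun i => i.elim, fun σ τ _ h => h, fun i => i.elim, ?_⟩
    simp [rep]
  · intro a ha b hb
    exact (hiff _).2 ⟨LatGen.union ((hiff a).1 ha).1 ((hiff b).1 hb).1,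
      ((hiff a).1 ha).2.union ((hiff b).1 hb).2⟩
  · intro a ha b hb
    exact (hiff _).2 ⟨LatGen.inter ((hiff a).1 ha).1 ((hiff b).1 hb).1,
      ((hiff a).1 ha).2.inter ((hiff b).1 hb).2⟩
  · exact fun a ha => isClosed_of_mem_KStarLat ((hiff a).1 ha).1
  · intro a ha
    refine (hiff _).2 ⟨hit_mem_KStarLat ha.1, Unit, inferInstance, fun σ => σ (Sum.inl ()),
      fun _ => a, fun σ τ h => h _, fun _ => ha, rfl⟩
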